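/- (Bulow–Klemperer) Let F be a regular distribution on [0,∞) with continuous CDF F, density f > 0, and finite mean (regular means φ(v) = v − (1 − F(v))/f(v) is nondecreasing), and let n ≥ 1. If V_1, …, V_{n+1} are i.i.d. draws from F, then the expected second-highest value among V_1, …, V_{n+1} is at least E[ max_{1 ≤ i ≤ n} φ⁺(V_i) ], where φ⁺(v) = max(φ(v), 0); that is, the expected revenue of the second-price auction with n + 1 bidders is at least the optimal (Myerson) expected revenue with n bidders. -/

import Mathlib

open MeasureTheory Set

/-! Selling to one bidder at a posted price `m` earns `m · P(V > m)`, and for every value `m` in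
the support this equals `E[φ(V); V > m]`: multiplying `φ` by the density turns the right-hand side
into `E[V; V > m] - ∫ₘ^∞ P(V > t) dt`, which the layer-cake formula evaluates. In a second-price
auction the winner faces the highest rival value as a posted price, so the expected second-highest
of `n + 1` values is the expected virtual value of the winner, that is, `E[max φ(Vᵢ)]` over the
`n + 1` bidders when `φ` is nondecreasing. Compared with the optimal auction for `n` bidders, the
outside option `0` has been replaced by the virtual value of an extra independent bidder, whose
mean is nonnegative; this can only help, because the maximum is convex. -/

section Order

/-- The second-largest entry of `w` counted with multiplicity: the largest minimum of two entries at
distinct indices. -/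
noncomputable def secondHighest {ι α : Type*} [ConditionallyCompleteLinearOrder α]
    (w : ι → α) : α :=
  sSup {y | ∃ i j : ι, i ≠ j ∧ y = min (w i) (w j)}

/-- The profiles `w` in which `i` has the strictly highest value and so wins an auction that awards
the item to the highest value; tied profiles belong to no winning event. -/
def winningEvent {ι α : Type*} [LT α] (i : ι) : Set (ι → α) := {w | ∀ j, j ≠ i → w j < w i}

/-- The price faced by bidder `i` in a second-price auction: the highest value among the others. -/
noncomputable def highestRival {α : Type*} [ConditionallyCompleteLinearOrder α] {n : ℕ}
    (i : Fin (n + 1)) (w : Fin (n + 1) → α) : α :=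
  ⨆ j, i.removeNth w j

theorem pairwise_disjoint_winningEvent (ι α : Type*) [Preorder α] :
    Pairwise (Function.onFun Disjoint (winningEvent : ι → Set (ι → α))) := fun i j hij =>
  disjoint_left.2 fun _ hi hj => (hi j hij.symm).asymm (hj i hij)

theorem exists_mem_winningEvent_of_injective {ι α : Type*} [Finite ι] [Nonempty ι] [LinearOrder α]
    {w : ι → α} (hw : Function.Injective w) : ∃ i, w ∈ winningEvent i := by
  obtain ⟨i, hi⟩ := Finite.exists_max w
  exact ⟨i, fun j hj => (hi j).lt_of_ne (hw.ne hj)⟩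

theorem iSup_comp_eq_of_mem_winningEvent {ι α β : Type*} [Finite ι] [Preorder α]
    [ConditionallyCompleteLinearOrder β] {φ : α → β} {s : Set α} (hφ : MonotoneOn φ s)
    {w : ι → α} (hws : ∀ j, w j ∈ s) {i : ι} (hw : w ∈ winningEvent i) :
    ⨆ j, φ (w j) = φ (w i) := by
  have : Nonempty ι := ⟨i⟩
  refine le_antisymm (ciSup_le fun j => ?_)
    (le_ciSup (f := fun j => φ (w j)) (finite_range _).bddAbove i)
  rcases eq_or_ne j i with rfl | hj
  · rfl
  · exact hφ (hws j) (hws i) (hw j hj).le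

variable {α : Type*} [ConditionallyCompleteLinearOrder α] {n : ℕ}

theorem le_highestRival {i j : Fin (n + 1)} (hj : j ≠ i) (w : Fin (n + 1) → α) :
    w j ≤ highestRival i w := by
  obtain ⟨k, rfl⟩ := Fin.exists_succAbove_eq hj
  exact le_ciSup (f := i.removeNth w) (finite_range _).bddAbove k

variable [NeZero n]

theorem iSup_eq_max_removeNth (i : Fin (n + 1)) (g : Fin (n + 1) → α) :
    ⨆ k, g k = max (g i) (⨆ j, i.removeNth g j) := by
  refine le_antisymm (ciSup_le fun k => ?_)
    (max_le (le_ciSup (finite_range g).bddAbove i)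
      (ciSup_le fun j => le_ciSup (finite_range g).bddAbove (i.succAbove j)))
  rcases eq_or_ne k i with rfl | hk
  · exact le_max_left _ _
  · obtain ⟨j, rfl⟩ := Fin.exists_succAbove_eq hk
    exact le_max_of_le_right (le_ciSup (f := i.removeNth g) (finite_range _).bddAbove j)

theorem exists_highestRival_eq (i : Fin (n + 1)) (w : Fin (n + 1) → α) :
    ∃ j ≠ i, w j = highestRival i w := by
  obtain ⟨k, hk⟩ := exists_eq_ciSup_of_finite (f := i.removeNth w)
  exact ⟨i.succAbove k, Fin.succAbove_ne i k, hk⟩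

theorem mem_winningEvent_iff_highestRival_lt {i : Fin (n + 1)} {w : Fin (n + 1) → α} :
    w ∈ winningEvent i ↔ highestRival i w < w i := by
  refine ⟨fun hw => ?_, fun h j hj => (le_highestRival hj w).trans_lt h⟩
  obtain ⟨j, hj, hjw⟩ := exists_highestRival_eq i w
  exact hjw ▸ hw j hj

theorem secondHighest_eq_highestRival {i : Fin (n + 1)} {w : Fin (n + 1) → α}
    (hw : w ∈ winningEvent i) : secondHighest w = highestRival i w := by
  refine IsGreatest.csSup_eq ⟨?_, ?_⟩
  · obtain ⟨j, hj, hjw⟩ := exists_highestRival_eq i w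
    exact ⟨j, i, hj, by rw [min_eq_left (hw j hj).le, hjw]⟩
  · rintro _ ⟨j, k, hjk, rfl⟩
    rcases eq_or_ne j i with rfl | hj
    · exact min_le_of_right_le (le_highestRival hjk.symm w)
    · exact min_le_of_left_le (le_highestRival hj w)

end Order

theorem max_integral_le_integral_max {α : Type*} [MeasurableSpace α] {μ : Measure α}
    [IsProbabilityMeasure μ] {X : α → ℝ} (hX : Integrable X μ) (c : ℝ) :
    max (∫ x, X x ∂μ) c ≤ ∫ x, max (X x) c ∂μ := by
  have hmax : Integrable (fun x => max (X x) c) μ := hX.sup (integrable_const c)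
  refine max_le (integral_mono hX hmax fun x => le_max_left _ _) ?_
  calc c = ∫ _, c ∂μ := by simp
    _ ≤ ∫ x, max (X x) c ∂μ := integral_mono (integrable_const c) hmax fun x => le_max_right _ _

theorem setIntegral_prod_postedPrice_eq {α : Type*} [MeasurableSpace α] {ν : Measure ℝ}
    {ρ : Measure α} [IsFiniteMeasure ν] [IsFiniteMeasure ρ] {φ : ℝ → ℝ} {M : α → ℝ}
    (hφ : Integrable φ ν) (hMm : Measurable M) (hM : Integrable M ρ)
    (hpay : ∀ᵐ y ∂ρ, ∫ x in Ioi (M y), φ x ∂ν = M y * ν.real (Ioi (M y))) :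
    ∫ z in {z : ℝ × α | M z.2 < z.1}, φ z.1 ∂(ν.prod ρ) =
      ∫ z in {z : ℝ × α | M z.2 < z.1}, M z.2 ∂(ν.prod ρ) := by
  have hS : MeasurableSet {z : ℝ × α | M z.2 < z.1} :=
    measurableSet_lt (hMm.comp measurable_snd) measurable_fst
  have hsection : ∀ (g : ℝ × α → ℝ) (y : α),
      ∫ x, {z : ℝ × α | M z.2 < z.1}.indicator g (x, y) ∂ν = ∫ x in Ioi (M y), g (x, y) ∂ν :=
    fun g y => integral_indicator (s := Ioi (M y)) (f := fun x => g (x, y)) measurableSet_Ioi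
  rw [← integral_indicator hS, ← integral_indicator hS,
    integral_prod_symm _ ((hφ.comp_fst ρ).indicator hS),
    integral_prod_symm _ ((hM.comp_snd ν).indicator hS)]
  refine integral_congr_ae ?_
  filter_upwards [hpay] with y hy
  calc _ = ∫ x in Ioi (M y), φ x ∂ν := hsection _ y
    _ = M y * ν.real (Ioi (M y)) := hy
    _ = ∫ _ in Ioi (M y), M y ∂ν := by rw [setIntegral_const, smul_eq_mul, mul_comm]
    _ = _ := (hsection (fun z => M z.2) y).symm

section IID

theorem ae_prod_ne {α : Type*} [MeasurableSpace α] [MeasurableEq α] (ν ρ : Measure α) [SFinite ρ]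
    [NullSingletonClass ρ] : ∀ᵐ z ∂(ν.prod ρ), z.1 ≠ z.2 := by
  refine (Measure.ae_prod_iff_ae_ae
    (measurableSet_eq_fun measurable_fst measurable_snd).compl).2 ?_
  exact ae_of_all _ fun x => (ρ.ae_ne x).mono fun _ => Ne.symm

open ProbabilityTheory in
theorem ae_injective_pi {ι α : Type*} [Fintype ι] [MeasurableSpace α] [MeasurableEq α]
    (ν : Measure α) [IsProbabilityMeasure ν] [NullSingletonClass ν] :
    ∀ᵐ w ∂(Measure.pi fun _ : ι => ν), Function.Injective w := by
  have hpair : ∀ i j : ι, i ≠ j → ∀ᵐ w ∂(Measure.pi fun _ : ι => ν), w i ≠ w j := by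
    intro i j hij
    have hindep : IndepFun (fun w : ι → α => w i) (fun w => w j) (Measure.pi fun _ => ν) :=
      (iIndepFun_pi (X := fun _ => id) fun _ => aemeasurable_id).indepFun hij
    have hmap : (Measure.pi fun _ : ι => ν).map (fun w => (w i, w j)) = ν.prod ν := by
      rw [(indepFun_iff_map_prod_eq_prod_map_map (measurable_pi_apply i).aemeasurable
          (measurable_pi_apply j).aemeasurable).1 hindep,
        (measurePreserving_eval (fun _ => ν) i).map_eq,
        (measurePreserving_eval (fun _ => ν) j).map_eq]
    exact ae_of_ae_map (f := fun w : ι → α => (w i, w j)) (by fun_prop) (hmap ▸ ae_prod_ne ν ν)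
  have hall : ∀ᵐ w ∂(Measure.pi fun _ : ι => ν), ∀ i j, i ≠ j → w i ≠ w j := by
    simpa only [ae_all_iff] using hpair
  filter_upwards [hall] with w hw i j hij
  exact not_imp_not.1 (hw i j) hij

theorem ae_all_pi {ι α : Type*} [Fintype ι] [MeasurableSpace α] {ν : Measure α}
    [IsProbabilityMeasure ν] {p : α → Prop} (hp : ∀ᵐ x ∂ν, p x) :
    ∀ᵐ w ∂(Measure.pi fun _ : ι => ν), ∀ i, p (w i) :=
  ae_all_iff.2 fun _ => Measure.tendsto_eval_ae_ae.eventually hp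

theorem measurableSet_winningEvent {ι α : Type*} [Countable ι] [LinearOrder α] [TopologicalSpace α]
    [OrderClosedTopology α] [SecondCountableTopology α] [MeasurableSpace α]
    [OpensMeasurableSpace α] (i : ι) : MeasurableSet (winningEvent i : Set (ι → α)) := by
  simp only [winningEvent, ofPred_forall]
  exact .iInter fun j => .iInter fun _ =>
    measurableSet_lt (measurable_pi_apply j) (measurable_pi_apply i)

theorem integrable_iSup_comp_eval {ι α : Type*} [Fintype ι] [MeasurableSpace α] {ν : Measure α}
    [IsProbabilityMeasure ν] {g : α → ℝ} (hg : Integrable g ν) :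
    Integrable (fun w : ι → α => ⨆ i, g (w i)) (Measure.pi fun _ => ν) := by
  have heval : ∀ i, Integrable (fun w : ι → α => g (w i)) (Measure.pi fun _ => ν) := fun i =>
    integrable_comp_eval (μ := fun _ => ν) hg
  refine (integrable_finsetSum Finset.univ fun i _ => (heval i).abs).mono'
    (AEMeasurable.iSup fun i => (heval i).aemeasurable).aestronglyMeasurable
    (ae_of_all _ fun w => ?_)
  rcases isEmpty_or_nonempty ι with _ | _
  · simp
  obtain ⟨j, hj⟩ := exists_eq_ciSup_of_finite (f := fun i => g (w i))
  rw [← hj]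
  exact Finset.single_le_sum (f := fun i => |g (w i)|) (fun _ _ => abs_nonneg _)
    (Finset.mem_univ j)

theorem integral_eq_sum_setIntegral_winningEvent {ι α E : Type*} [Fintype ι] [Nonempty ι]
    [LinearOrder α] [TopologicalSpace α] [OrderClosedTopology α] [SecondCountableTopology α]
    [MeasurableSpace α] [OpensMeasurableSpace α] [NormedAddCommGroup E] [NormedSpace ℝ E]
    {ν : Measure α} [IsProbabilityMeasure ν] [NullSingletonClass ν] {g : (ι → α) → E}
    (hg : ∀ i, IntegrableOn g (winningEvent i) (Measure.pi fun _ => ν)) :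
    ∫ w, g w ∂(Measure.pi fun _ => ν) =
      ∑ i, ∫ w in winningEvent i, g w ∂(Measure.pi fun _ => ν) := by
  rw [← integral_iUnion_fintype measurableSet_winningEvent (pairwise_disjoint_winningEvent ι α) hg,
    Measure.restrict_eq_self_of_ae_mem]
  filter_upwards [ae_injective_pi ν] with w hw
  exact mem_iUnion.2 (exists_mem_winningEvent_of_injective hw)

variable {n : ℕ} {ν : Measure ℝ} [IsProbabilityMeasure ν] {φ : ℝ → ℝ}

theorem integrable_highestRival (hid : Integrable (fun x => x) ν) (i : Fin (n + 1)) :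
    Integrable (highestRival i) (Measure.pi fun _ : Fin (n + 1) => ν) :=
  (measurePreserving_piFinSuccAbove (fun _ => ν) i).integrable_comp_of_integrable
    ((integrable_iSup_comp_eval hid).comp_snd ν)

variable [NeZero n]

theorem setIntegral_winningEvent_eq (hφ : Integrable φ ν) (hid : Integrable (fun x => x) ν)
    (hpay : ∀ᵐ m ∂ν, ∫ x in Ioi m, φ x ∂ν = m * ν.real (Ioi m)) (i : Fin (n + 1)) :
    ∫ w in winningEvent i, φ (w i) ∂(Measure.pi fun _ => ν) =
      ∫ w in winningEvent i, highestRival i w ∂(Measure.pi fun _ => ν) := by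
  have hmp := measurePreserving_piFinSuccAbove (fun _ : Fin (n + 1) => ν) i
  have hemb := (MeasurableEquiv.piFinSuccAbove (fun _ : Fin (n + 1) => ℝ) i).measurableEmbedding
  have hwin : winningEvent i = MeasurableEquiv.piFinSuccAbove (fun _ => ℝ) i ⁻¹'
      {z : ℝ × (Fin n → ℝ) | ⨆ j, z.2 j < z.1} :=
    ext fun w => mem_winningEvent_iff_highestRival_lt
  have hprice : ∀ᵐ v ∂(Measure.pi fun _ : Fin n => ν),
      ∫ x in Ioi (⨆ j, v j), φ x ∂ν = (⨆ j, v j) * ν.real (Ioi (⨆ j, v j)) := by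
    filter_upwards [ae_all_pi hpay] with v hv
    obtain ⟨j, hj⟩ := exists_eq_ciSup_of_finite (f := v)
    exact hj ▸ hv j
  rw [hwin]
  exact (hmp.setIntegral_preimage_emb hemb (fun z => φ z.1) _).trans
    ((setIntegral_prod_postedPrice_eq hφ (Measurable.iSup fun j => measurable_pi_apply j)
      (integrable_iSup_comp_eval hid) hprice).trans
    (hmp.setIntegral_preimage_emb hemb (fun z => ⨆ j, z.2 j) _).symm)

theorem integral_secondHighest_eq [NullSingletonClass ν] {s : Set ℝ} (hs : ∀ᵐ x ∂ν, x ∈ s)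
    (hmono : MonotoneOn φ s) (hφ : Integrable φ ν) (hid : Integrable (fun x => x) ν)
    (hpay : ∀ᵐ m ∂ν, ∫ x in Ioi m, φ x ∂ν = m * ν.real (Ioi m)) :
    ∫ w : Fin (n + 1) → ℝ, secondHighest w ∂(Measure.pi fun _ => ν) =
      ∫ w : Fin (n + 1) → ℝ, ⨆ i, φ (w i) ∂(Measure.pi fun _ => ν) := by
  have hprice : ∀ i, EqOn (highestRival i) secondHighest
      (winningEvent i : Set (Fin (n + 1) → ℝ)) :=
    fun i w hw => (secondHighest_eq_highestRival hw).symm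
  have hwinner : ∀ i : Fin (n + 1), ∀ᵐ w ∂(Measure.pi fun _ => ν), w ∈ winningEvent i →
      φ (w i) = ⨆ j, φ (w j) := by
    intro i
    filter_upwards [ae_all_pi hs] with w hws hw
    exact (iSup_comp_eq_of_mem_winningEvent hmono hws hw).symm
  calc ∫ w, secondHighest w ∂(Measure.pi fun _ => ν)
      = ∑ i, ∫ w in winningEvent i, secondHighest w ∂(Measure.pi fun _ => ν) :=
        integral_eq_sum_setIntegral_winningEvent fun i =>
          (integrable_highestRival hid i).integrableOn.congr_fun (hprice i)
            (measurableSet_winningEvent i)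
    _ = ∑ i, ∫ w in winningEvent i, highestRival i w ∂(Measure.pi fun _ => ν) :=
        Finset.sum_congr rfl fun i _ =>
          (setIntegral_congr_fun (measurableSet_winningEvent i) (hprice i)).symm
    _ = ∑ i : Fin (n + 1), ∫ w in winningEvent i, φ (w i) ∂(Measure.pi fun _ => ν) :=
        Finset.sum_congr rfl fun i _ => (setIntegral_winningEvent_eq hφ hid hpay i).symm
    _ = ∑ i, ∫ w in winningEvent i, ⨆ j, φ (w j) ∂(Measure.pi fun _ => ν) :=
        Finset.sum_congr rfl fun i _ =>
          setIntegral_congr_ae (measurableSet_winningEvent i) (hwinner i)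
    _ = ∫ w, ⨆ i, φ (w i) ∂(Measure.pi fun _ => ν) :=
        (integral_eq_sum_setIntegral_winningEvent fun _ =>
          (integrable_iSup_comp_eval hφ).integrableOn).symm

theorem integral_iSup_max_zero_le (hφ : Integrable φ ν) (hmean : 0 ≤ ∫ x, φ x ∂ν) :
    ∫ w : Fin n → ℝ, ⨆ i, max (φ (w i)) 0 ∂(Measure.pi fun _ => ν) ≤
      ∫ w : Fin (n + 1) → ℝ, ⨆ i, φ (w i) ∂(Measure.pi fun _ => ν) := by
  have hmp := measurePreserving_piFinSuccAbove (fun _ : Fin (n + 1) => ν) 0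
  have hsup : Integrable (fun v : Fin n → ℝ => ⨆ i, φ (v i)) (Measure.pi fun _ => ν) :=
    integrable_iSup_comp_eval hφ
  have hmax : Integrable (fun z : ℝ × (Fin n → ℝ) => max (φ z.1) (⨆ i, φ (z.2 i)))
      (ν.prod (Measure.pi fun _ => ν)) := (hφ.comp_fst _).sup (hsup.comp_snd ν)
  calc ∫ v : Fin n → ℝ, ⨆ i, max (φ (v i)) 0 ∂(Measure.pi fun _ => ν)
      ≤ ∫ v : Fin n → ℝ, ∫ x, max (φ x) (⨆ i, φ (v i)) ∂ν ∂(Measure.pi fun _ => ν) := by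
        refine integral_mono (integrable_iSup_comp_eval hφ.pos_part) hmax.integral_prod_right
          fun v => (ciSup_le fun i => ?_).trans (max_integral_le_integral_max hφ _)
        exact max_comm (∫ x, φ x ∂ν) _ ▸ max_le_max
          (le_ciSup (f := fun i => φ (v i)) (finite_range _).bddAbove i) hmean
    _ = ∫ z : ℝ × (Fin n → ℝ), max (φ z.1) (⨆ i, φ (z.2 i)) ∂(ν.prod (Measure.pi fun _ => ν)) :=
        (integral_prod_symm _ hmax).symm
    _ = ∫ w : Fin (n + 1) → ℝ, max (φ (w 0)) (⨆ i, φ (Fin.removeNth 0 w i))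
          ∂(Measure.pi fun _ => ν) := (hmp.integral_comp' _).symm
    _ = ∫ w : Fin (n + 1) → ℝ, ⨆ i, φ (w i) ∂(Measure.pi fun _ => ν) :=
        integral_congr_ae (ae_of_all _ fun w => (iSup_eq_max_removeNth 0 fun i => φ (w i)).symm)

end IID

section LayerCake

theorem lintegral_Ioi_sub_eq (ν : Measure ℝ) (m : ℝ) :
    ∫⁻ x in Ioi m, ENNReal.ofReal (x - m) ∂ν = ∫⁻ t in Ioi m, ν (Ioi t) := by
  have hnonneg : ∀ᵐ x ∂ν.restrict (Ioi m), 0 ≤ x - m :=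
    ae_restrict_of_forall_mem measurableSet_Ioi fun x hx => sub_nonneg.2 (le_of_lt hx)
  have hlevel : ∀ t ∈ Ioi (0 : ℝ), (ν.restrict (Ioi m)) {x | t < x - m} = ν (Ioi (t + m)) := by
    intro t ht
    have hset : {x | t < x - m} = Ioi (t + m) := preimage_sub_const_Ioi m t
    rw [hset, Measure.restrict_apply measurableSet_Ioi, Ioi_inter_Ioi,
      sup_of_le_left (le_add_of_nonneg_left (le_of_lt ht))]
  have hshift : (fun t => t + m) ⁻¹' Ioi m = Ioi 0 := by simp
  rw [lintegral_eq_lintegral_meas_lt _ hnonneg (by fun_prop),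
    setLIntegral_congr_fun measurableSet_Ioi hlevel, ← hshift]
  exact (measurePreserving_add_right volume m).setLIntegral_comp_preimage_emb
    (measurableEmbedding_addRight m) (fun t => ν (Ioi t)) (Ioi m)

theorem measurable_measure_Ioi (ν : Measure ℝ) : Measurable fun t => ν (Ioi t) :=
  Antitone.measurable fun _ _ hab => measure_mono (Ioi_subset_Ioi hab)

variable {ν : Measure ℝ} [IsFiniteMeasure ν]

theorem integrableOn_measureReal_Ioi (hid : Integrable (fun x => x) ν) (m : ℝ) :
    IntegrableOn (fun t => ν.real (Ioi t)) (Ici m) := by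
  rw [integrableOn_Ici_iff_integrableOn_Ioi]
  refine integrable_toReal_of_lintegral_ne_top (measurable_measure_Ioi ν).aemeasurable ?_
  rw [← lintegral_Ioi_sub_eq]
  exact (hid.sub (integrable_const m)).integrableOn.lintegral_lt_top.ne

theorem setIntegral_Ioi_id_eq (hid : Integrable (fun x => x) ν) (m : ℝ) :
    ∫ x in Ioi m, x ∂ν = m * ν.real (Ioi m) + ∫ t in Ioi m, ν.real (Ioi t) := by
  have hsub : ∫ x in Ioi m, (x - m) ∂ν = ∫ t in Ioi m, ν.real (Ioi t) := by
    rw [integral_eq_lintegral_of_nonneg_ae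
        (ae_restrict_of_forall_mem measurableSet_Ioi fun x hx => sub_nonneg.2 (le_of_lt hx))
        (by fun_prop), lintegral_Ioi_sub_eq]
    exact (integral_toReal (measurable_measure_Ioi ν).aemeasurable
      (ae_of_all _ fun t => measure_lt_top ν (Ioi t))).symm
  rw [← hsub, integral_sub hid.integrableOn (integrable_const m), setIntegral_const, smul_eq_mul]
  ring

end LayerCake

/-- `ν` has density `f` with respect to the restriction of `μ` to `s`, and `f` is positive
on `s`; the values of `f` outside `s` are irrelevant. -/
structure HasPosDensityOn {α : Type*} [MeasurableSpace α] (ν μ : Measure α) (s : Set α)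
    (f : α → ℝ) : Prop where
  measurableSet : MeasurableSet s
  measurable : Measurable f
  pos : ∀ x ∈ s, 0 < f x
  eq_withDensity : ν = (μ.restrict s).withDensity fun x => ENNReal.ofReal (f x)

namespace HasPosDensityOn

variable {α : Type*} [MeasurableSpace α] {ν μ : Measure α} {s : Set α} {f : α → ℝ}

theorem absolutelyContinuous (h : HasPosDensityOn ν μ s f) : ν ≪ μ.restrict s :=
  h.eq_withDensity ▸ withDensity_absolutelyContinuous _ _

theorem ae_mem (h : HasPosDensityOn ν μ s f) : ∀ᵐ x ∂ν, x ∈ s :=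
  h.absolutelyContinuous.ae_le (ae_restrict_mem h.measurableSet)

theorem nullSingletonClass [NullSingletonClass μ] (h : HasPosDensityOn ν μ s f) :
    NullSingletonClass ν :=
  ⟨fun x => h.absolutelyContinuous (measure_singleton x)⟩

theorem toReal_ofReal_smul_div (h : HasPosDensityOn ν μ s f) (g : α → ℝ) {x : α} (hx : x ∈ s) :
    (ENNReal.ofReal (f x)).toReal • (g x / f x) = g x := by
  rw [ENNReal.toReal_ofReal (h.pos x hx).le, smul_eq_mul, mul_div_cancel₀ _ (h.pos x hx).ne']

theorem integrable_div_iff (h : HasPosDensityOn ν μ s f) {g : α → ℝ} :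
    Integrable (fun x => g x / f x) ν ↔ IntegrableOn g s μ := by
  rw [h.eq_withDensity, integrable_withDensity_iff_integrable_smul' h.measurable.ennreal_ofReal
    (ae_of_all _ fun _ => ENNReal.ofReal_lt_top)]
  exact integrableOn_congr_fun (fun x hx => h.toReal_ofReal_smul_div g hx) h.measurableSet

theorem setIntegral_div (h : HasPosDensityOn ν μ s f) (g : α → ℝ) {t : Set α}
    (ht : MeasurableSet t) : ∫ x in t, g x / f x ∂ν = ∫ x in t ∩ s, g x ∂μ := by
  rw [h.eq_withDensity, setIntegral_withDensity_eq_setIntegral_toReal_smul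
    h.measurable.ennreal_ofReal (ae_of_all _ fun _ => ENNReal.ofReal_lt_top) _ ht,
    Measure.restrict_restrict ht]
  exact setIntegral_congr_fun (ht.inter h.measurableSet) fun x hx =>
    h.toReal_ofReal_smul_div g hx.2

theorem measureReal_eq_setIntegral (h : HasPosDensityOn ν μ s f) {t : Set α}
    (ht : MeasurableSet t) : ν.real t = ∫ x in t ∩ s, f x ∂μ := by
  have hone : ∀ᵐ x ∂ν, x ∈ t → f x / f x = 1 :=
    h.ae_mem.mono fun x hx _ => div_self (h.pos x hx).ne'
  rw [← h.setIntegral_div f ht, setIntegral_congr_ae ht hone, setIntegral_const, smul_eq_mul,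
    mul_one]

theorem integrable_iff_integrableOn_mul (h : HasPosDensityOn ν μ s f) {g : α → ℝ} :
    Integrable g ν ↔ IntegrableOn (fun x => g x * f x) s μ := by
  rw [← h.integrable_div_iff]
  exact integrable_congr
    (h.ae_mem.mono fun x hx => (mul_div_cancel_right₀ (g x) (h.pos x hx).ne').symm)

end HasPosDensityOn

theorem measureReal_Ioi_eq_zero_of_notMem {α : Type*} [Preorder α] [MeasurableSpace α]
    {ν : Measure α} {s : Set α} (hν : ∀ᵐ x ∂ν, x ∈ s) (hs : s.OrdConnected) {a b : α} (ha : a ∈ s)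
    (hab : a ≤ b) (hb : b ∉ s) : ν.real (Ioi b) = 0 := by
  have hdisj : Ioi b ⊆ sᶜ := fun y hby hy => hb (hs.out ha hy ⟨hab, le_of_lt hby⟩)
  rw [measureReal_def, measure_mono_null hdisj hν, ENNReal.toReal_zero]

/-- Myerson's virtual value `φ(v) = v - (1 - F(v)) / f(v)` of a bidder whose value has cumulative
distribution function `F` and density `f`; meaningful only where `f v ≠ 0`. -/
noncomputable def virtualValue (F f : ℝ → ℝ) (v : ℝ) : ℝ := v - (1 - F v) / f v

section VirtualValue

open ProbabilityTheory

variable {ν : Measure ℝ} [IsProbabilityMeasure ν] {I : Set ℝ} {F f : ℝ → ℝ}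

theorem virtualValue_ae_eq (h : HasPosDensityOn ν volume I f) (hF : EqOn F (cdf ν) I) :
    virtualValue F f =ᵐ[ν] fun x => x - ν.real (Ioi x) / f x := by
  filter_upwards [h.ae_mem] with x hx
  rw [virtualValue, hF hx, cdf_eq_real, ← probReal_compl_eq_one_sub measurableSet_Iic, compl_Iic]

theorem integrable_measureReal_Ioi_div (h : HasPosDensityOn ν volume I f) (hI0 : I ⊆ Ici 0)
    (hid : Integrable (fun x => x) ν) : Integrable (fun x => ν.real (Ioi x) / f x) ν :=
  h.integrable_div_iff.2 ((integrableOn_measureReal_Ioi hid 0).mono_set hI0)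

theorem integrable_virtualValue (h : HasPosDensityOn ν volume I f) (hF : EqOn F (cdf ν) I)
    (hI0 : I ⊆ Ici 0) (hid : Integrable (fun x => x) ν) : Integrable (virtualValue F f) ν :=
  (hid.sub (integrable_measureReal_Ioi_div h hI0 hid)).congr (virtualValue_ae_eq h hF).symm

theorem setIntegral_virtualValue (h : HasPosDensityOn ν volume I f) (hF : EqOn F (cdf ν) I)
    (hI0 : I ⊆ Ici 0) (hid : Integrable (fun x => x) ν) {t : Set ℝ} (ht : MeasurableSet t) :
    ∫ x in t, virtualValue F f x ∂ν = ∫ x in t, x ∂ν - ∫ x in t ∩ I, ν.real (Ioi x) := by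
  rw [setIntegral_congr_ae ht ((virtualValue_ae_eq h hF).mono fun x hx _ => hx),
    integral_sub hid.integrableOn (integrable_measureReal_Ioi_div h hI0 hid).integrableOn,
    h.setIntegral_div _ ht]

theorem setIntegral_Ioi_virtualValue (h : HasPosDensityOn ν volume I f) (hF : EqOn F (cdf ν) I)
    (hI : I.OrdConnected) (hI0 : I ⊆ Ici 0) (hid : Integrable (fun x => x) ν) {m : ℝ}
    (hm : m ∈ I) : ∫ x in Ioi m, virtualValue F f x ∂ν = m * ν.real (Ioi m) := by
  have htail : ∫ x in Ioi m ∩ I, ν.real (Ioi x) = ∫ x in Ioi m, ν.real (Ioi x) :=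
    (setIntegral_eq_of_subset_of_forall_sdiff_eq_zero measurableSet_Ioi inter_subset_left
      fun x hx => measureReal_Ioi_eq_zero_of_notMem h.ae_mem hI hm (le_of_lt hx.1)
        fun hxI => hx.2 ⟨hx.1, hxI⟩).symm
  rw [setIntegral_virtualValue h hF hI0 hid measurableSet_Ioi, htail, setIntegral_Ioi_id_eq hid,
    add_sub_cancel_right]

theorem integral_virtualValue_nonneg (h : HasPosDensityOn ν volume I f) (hF : EqOn F (cdf ν) I)
    (hI0 : I ⊆ Ici 0) (hid : Integrable (fun x => x) ν) : 0 ≤ ∫ x, virtualValue F f x ∂ν := by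
  have hmean : ∫ x, x ∂ν = ∫ t in Ici 0, ν.real (Ioi t) := by
    have hpos : ∫ x in Ioi 0, x ∂ν = ∫ x, x ∂ν :=
      setIntegral_eq_integral_of_ae_compl_eq_zero
        (h.ae_mem.mono fun x hx hx0 => (not_lt.1 hx0).antisymm (hI0 hx))
    rw [← hpos, setIntegral_Ioi_id_eq hid, zero_mul, zero_add, integral_Ici_eq_integral_Ioi]
  have hsurvival : ∫ t in I, ν.real (Ioi t) ≤ ∫ t in Ici 0, ν.real (Ioi t) :=
    setIntegral_mono_set (integrableOn_measureReal_Ioi hid 0)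
      (ae_of_all _ fun t => measureReal_nonneg) hI0.eventuallyLE
  have hφ := setIntegral_virtualValue h hF hI0 hid MeasurableSet.univ
  rw [univ_inter, setIntegral_univ, setIntegral_univ] at hφ
  rw [hφ, hmean]
  exact sub_nonneg.2 hsurvival

theorem eqOn_Ici_cdf_of_eq_intervalIntegral (h : HasPosDensityOn ν volume (Ici 0) f)
    (hF : ∀ t, F t = ∫ s in (0 : ℝ)..t, f s) : EqOn F (cdf ν) (Ici 0) := by
  intro t ht
  rw [hF, cdf_eq_real, h.measureReal_eq_setIntegral measurableSet_Iic, inter_comm, Ici_inter_Iic,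
    integral_Icc_eq_integral_Ioc, intervalIntegral.integral_of_le ht]

theorem bulow_klemperer_general {n : ℕ} [NeZero n] (h : HasPosDensityOn ν volume I f)
    (hF : EqOn F (cdf ν) I) (hI : I.OrdConnected) (hI0 : I ⊆ Ici 0)
    (hreg : MonotoneOn (virtualValue F f) I) (hid : Integrable (fun x => x) ν) :
    ∫ w : Fin n → ℝ, ⨆ i, max (virtualValue F f (w i)) 0 ∂(Measure.pi fun _ => ν) ≤
      ∫ w : Fin (n + 1) → ℝ, secondHighest w ∂(Measure.pi fun _ => ν) := by
  have := h.nullSingletonClass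
  have hφ := integrable_virtualValue h hF hI0 hid
  rw [integral_secondHighest_eq h.ae_mem hreg hφ hid
    (h.ae_mem.mono fun m hm => setIntegral_Ioi_virtualValue h hF hI hI0 hid hm)]
  exact integral_iSup_max_zero_le hφ (integral_virtualValue_nonneg h hF hI0 hid)

end VirtualValue

/-- Bulow–Klemperer: For a regular distribution on `[0,∞)` (continuous
CDF `F`, density `f > 0`, finite mean, nondecreasing virtual value
`φ(v) = v − (1 − F(v))/f(v)`) and `n ≥ 1`, the expected second-highest value among
`n + 1` i.i.d. draws is at least `E[max_{1 ≤ i ≤ n} φ⁺(V_i)]`, the optimal (Myerson)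
expected revenue with `n` bidders. -/
theorem bulow_klemperer
    (n : ℕ) (hn : 1 ≤ n)
    (f F : ℝ → ℝ) (hfm : Measurable f) (hFc : Continuous F)
    (hfpos : ∀ t, 0 ≤ t → 0 < f t)
    (hF : ∀ t, F t = ∫ s in (0 : ℝ)..t, f s)
    (hreg : MonotoneOn (fun v => v - (1 - F v) / f v) (Ici 0))
    (ν : Measure ℝ)
    (hν : ν = (volume.restrict (Ici (0 : ℝ))).withDensity
      fun t => ENNReal.ofReal (f t))
    (hprob : IsProbabilityMeasure ν)
    (hmean : IntegrableOn (fun t => t * f t) (Ici 0))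
    (μn : Measure (Fin n → ℝ)) (hμn : μn = Measure.pi fun _ => ν)
    (μn1 : Measure (Fin (n + 1) → ℝ)) (hμn1 : μn1 = Measure.pi fun _ => ν)
    (sh : (Fin (n + 1) → ℝ) → ℝ)
    (hsh : ∀ w, sh w = sSup {y | ∃ i j : Fin (n + 1), i ≠ j ∧ y = min (w i) (w j)}) :
    (∫ w, sh w ∂μn1) ≥
      ∫ w, (⨆ i : Fin n, max (w i - (1 - F (w i)) / f (w i)) 0) ∂μn := by
  have : NeZero n := ⟨by lia⟩
  have h : HasPosDensityOn ν volume (Ici 0) f := ⟨measurableSet_Ici, hfm, hfpos, hν⟩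
  obtain rfl : sh = secondHighest := funext hsh
  subst hμn hμn1
  exact bulow_klemperer_general h (eqOn_Ici_cdf_of_eq_intervalIntegral h hF) ordConnected_Ici
    Subset.rfl hreg (h.integrable_iff_integrableOn_mul.2 hmean)
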